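/- For every t ≥ 1, s_max(t) = sfs_max(t) + 1, where s_max(t) is the maximum size of a Sidon set in F_2^t and sfs_max(t) is the maximum size of a sum-free Sidon set in F_2^t. -/

import Mathlib

/-- A subset `M` of `𝔽₂ᵗ` is Sidon if `m₁+m₂ ≠ m₃+m₄` for pairwise distinct elements. -/
def IsSidon {t : ℕ} (M : Finset (Fin t → ZMod 2)) : Prop :=
  ∀ m₁ ∈ M, ∀ m₂ ∈ M, ∀ m₃ ∈ M, ∀ m₄ ∈ M,
    (m₁ ≠ m₂ ∧ m₁ ≠ m₃ ∧ m₁ ≠ m₄ ∧ m₂ ≠ m₃ ∧ m₂ ≠ m₄ ∧ m₃ ≠ m₄) →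
    m₁ + m₂ ≠ m₃ + m₄

/-- `M` is sum-free if `m₁+m₂ ≠ m₃` for all `m₁,m₂,m₃ ∈ M`. -/
def IsSumFree {t : ℕ} (M : Finset (Fin t → ZMod 2)) : Prop :=
  ∀ m₁ ∈ M, ∀ m₂ ∈ M, ∀ m₃ ∈ M, m₁ + m₂ ≠ m₃

/-- A maximal Sidon set. -/
def IsMaximalSidon {t : ℕ} (M : Finset (Fin t → ZMod 2)) : Prop :=
  IsSidon M ∧ ∀ S : Finset (Fin t → ZMod 2), IsSidon S → M ⊆ S → S = M

/-- Maximum size of a Sidon set in `𝔽₂ᵗ`. -/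
noncomputable def sMax (t : ℕ) : ℕ :=
  sSup {n : ℕ | ∃ M : Finset (Fin t → ZMod 2), IsSidon M ∧ M.card = n}

/-- 2-sums of `M`. -/
def twoSums {t : ℕ} (M : Finset (Fin t → ZMod 2)) : Finset (Fin t → ZMod 2) :=
  (M ×ˢ M).image fun p => p.1 + p.2

/-- 2-star-sums of `M` (sums of two distinct elements). -/
def twoStarSums {t : ℕ} (M : Finset (Fin t → ZMod 2)) : Finset (Fin t → ZMod 2) :=
  ((M ×ˢ M).filter fun p => p.1 ≠ p.2).image fun p => p.1 + p.2

/-- 3-sums of `M`. -/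
def threeSums {t : ℕ} (M : Finset (Fin t → ZMod 2)) : Finset (Fin t → ZMod 2) :=
  ((M ×ˢ M) ×ˢ M).image fun p => p.1.1 + p.1.2 + p.2

/-- 3-star-sums of `M` (sums of three pairwise distinct elements). -/
def threeStarSums {t : ℕ} (M : Finset (Fin t → ZMod 2)) : Finset (Fin t → ZMod 2) :=
  (((M ×ˢ M) ×ˢ M).filter fun p => p.1.1 ≠ p.1.2 ∧ p.1.1 ≠ p.2 ∧ p.1.2 ≠ p.2).image
    fun p => p.1.1 + p.1.2 + p.2

/-- 4-sums of `M`. -/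
def fourSums {t : ℕ} (M : Finset (Fin t → ZMod 2)) : Finset (Fin t → ZMod 2) :=
  (((M ×ˢ M) ×ˢ M) ×ˢ M).image fun p => p.1.1.1 + p.1.1.2 + p.1.2 + p.2

/-- Maximum size of a sum-free Sidon set in `𝔽₂ᵗ`. -/
noncomputable def sfsMax (t : ℕ) : ℕ :=
  sSup {n : ℕ | ∃ M : Finset (Fin t → ZMod 2), IsSumFree M ∧ IsSidon M ∧ M.card = n}

/-!
The Sidon property is translation invariant, so a largest Sidon set may be assumed to contain `0`.
For `0 ∉ M`, the Sidon condition on `insert 0 M` says that `M` is Sidon and that no relation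
`a + b = c + 0` holds in `M`, that is, that `M` is sum-free. So inserting and erasing `0`
exchanges the sum-free Sidon sets with the Sidon sets containing `0`.
-/

open scoped Pointwise

section

variable {t : ℕ} {M N : Finset (Fin t → ZMod 2)}

theorem isSidon_empty : IsSidon (∅ : Finset (Fin t → ZMod 2)) :=
  fun _ h => absurd h (Finset.notMem_empty _)

theorem isSumFree_empty : IsSumFree (∅ : Finset (Fin t → ZMod 2)) :=
  fun _ h => absurd h (Finset.notMem_empty _)

theorem IsSidon.mono (hN : IsSidon N) (hMN : M ⊆ N) : IsSidon M :=
  fun a ha b hb c hc d hd => hN a (hMN ha) b (hMN hb) c (hMN hc) d (hMN hd)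

theorem IsSidon.vadd_finset (hM : IsSidon M) (v : Fin t → ZMod 2) : IsSidon (v +ᵥ M) := by
  intro a' ha' b' hb' c' hc' d' hd' hne hsum
  obtain ⟨a, ha, rfl⟩ := Finset.mem_vadd_finset.mp ha'
  obtain ⟨b, hb, rfl⟩ := Finset.mem_vadd_finset.mp hb'
  obtain ⟨c, hc, rfl⟩ := Finset.mem_vadd_finset.mp hc'
  obtain ⟨d, hd, rfl⟩ := Finset.mem_vadd_finset.mp hd'
  simp only [vadd_eq_add, ne_eq, add_right_inj] at hne hsum
  refine hM a ha b hb c hc d hd hne ?_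
  rw [add_add_add_comm, add_add_add_comm v c] at hsum
  exact add_left_cancel hsum

theorem IsSumFree.zero_notMem (hM : IsSumFree M) : 0 ∉ M :=
  fun h0 => hM 0 h0 0 h0 0 h0 (add_zero 0)

theorem IsSumFree.isSidon_insert_zero (hfree : IsSumFree M) (hsidon : IsSidon M) :
    IsSidon (insert 0 M) := by
  rintro a ha b hb c hc d hd ⟨hab, hac, had, hbc, hbd, hcd⟩ hsum
  rw [Finset.mem_insert] at ha hb hc hd
  rcases ha with rfl | ha
  · rw [zero_add] at hsum
    exact hfree c (hc.resolve_left hac.symm) d (hd.resolve_left had.symm) b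
      (hb.resolve_left hab.symm) hsum.symm
  rcases hb with rfl | hb
  · rw [add_zero] at hsum
    exact hfree c (hc.resolve_left hbc.symm) d (hd.resolve_left hbd.symm) a ha hsum.symm
  rcases hc with rfl | hc
  · rw [zero_add] at hsum
    exact hfree a ha b hb d (hd.resolve_left hcd.symm) hsum
  rcases hd with rfl | hd
  · rw [add_zero] at hsum
    exact hfree a ha b hb c hc hsum
  exact hsidon a ha b hb c hc d hd ⟨hab, hac, had, hbc, hbd, hcd⟩ hsum

theorem IsSidon.isSumFree_of_insert_zero (hM : IsSidon (insert 0 M)) (h0 : 0 ∉ M) :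
    IsSumFree M := by
  intro a ha b hb c hc hsum
  have ha0 : a ≠ 0 := ne_of_mem_of_not_mem ha h0
  have hb0 : b ≠ 0 := ne_of_mem_of_not_mem hb h0
  have hc0 : c ≠ 0 := ne_of_mem_of_not_mem hc h0
  have hab : a ≠ b := by
    rintro rfl
    exact hc0 (hsum.symm.trans (ZModModule.add_self a))
  have hac : a ≠ c := by
    rintro rfl
    exact hb0 (add_eq_left.mp hsum)
  have hbc : b ≠ c := by
    rintro rfl
    exact ha0 (add_eq_right.mp hsum)
  exact hM a (Finset.mem_insert_of_mem ha) b (Finset.mem_insert_of_mem hb)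
    c (Finset.mem_insert_of_mem hc) 0 (Finset.mem_insert_self 0 M)
    ⟨hab, hac, ha0, hbc, hb0, hc0⟩ (hsum.trans (add_zero c).symm)

theorem bddAbove_card_isSidon (t : ℕ) :
    BddAbove {n : ℕ | ∃ M : Finset (Fin t → ZMod 2), IsSidon M ∧ M.card = n} := by
  refine ⟨Fintype.card (Fin t → ZMod 2), ?_⟩
  rintro _ ⟨M, -, rfl⟩
  exact M.card_le_univ

theorem bddAbove_card_isSumFree_isSidon (t : ℕ) :
    BddAbove {n : ℕ | ∃ M : Finset (Fin t → ZMod 2), IsSumFree M ∧ IsSidon M ∧ M.card = n} := by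
  refine (bddAbove_card_isSidon t).mono ?_
  rintro _ ⟨M, -, hsidon, hcard⟩
  exact ⟨M, hsidon, hcard⟩

theorem IsSidon.card_le_sMax (hM : IsSidon M) : M.card ≤ sMax t :=
  le_csSup (bddAbove_card_isSidon t) ⟨M, hM, rfl⟩

theorem IsSumFree.card_le_sfsMax (hfree : IsSumFree M) (hsidon : IsSidon M) :
    M.card ≤ sfsMax t :=
  le_csSup (bddAbove_card_isSumFree_isSidon t) ⟨M, hfree, hsidon, rfl⟩

theorem exists_isSidon_card_eq_sMax (t : ℕ) :
    ∃ M : Finset (Fin t → ZMod 2), IsSidon M ∧ M.card = sMax t := by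
  refine Nat.sSup_mem ?_ (bddAbove_card_isSidon t)
  exact ⟨0, ∅, isSidon_empty, rfl⟩

theorem exists_isSumFree_isSidon_card_eq_sfsMax (t : ℕ) :
    ∃ M : Finset (Fin t → ZMod 2), IsSumFree M ∧ IsSidon M ∧ M.card = sfsMax t := by
  refine Nat.sSup_mem ?_ (bddAbove_card_isSumFree_isSidon t)
  exact ⟨0, ∅, isSumFree_empty, isSidon_empty, rfl⟩

theorem IsSidon.card_le_sfsMax_add_one_of_zero_mem (hM : IsSidon M) (h0 : 0 ∈ M) :
    M.card ≤ sfsMax t + 1 := by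
  have hfree : IsSumFree (M.erase 0) :=
    IsSidon.isSumFree_of_insert_zero (by rwa [Finset.insert_erase h0]) (Finset.notMem_erase 0 M)
  rw [← Finset.card_erase_add_one h0]
  gcongr
  exact hfree.card_le_sfsMax (hM.mono (Finset.erase_subset 0 M))

theorem IsSidon.card_le_sfsMax_add_one (hM : IsSidon M) : M.card ≤ sfsMax t + 1 := by
  rcases M.eq_empty_or_nonempty with rfl | ⟨m, hm⟩
  · exact Nat.zero_le _
  have h0 : 0 ∈ m +ᵥ M := Finset.mem_vadd_finset.mpr ⟨m, hm, ZModModule.add_self m⟩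
  rw [← Finset.card_vadd_finset m M]
  exact (hM.vadd_finset m).card_le_sfsMax_add_one_of_zero_mem h0

end

theorem sMax_eq_sfsMax_add_one (t : ℕ) (ht : 1 ≤ t) :
    sMax t = sfsMax t + 1 := by
  apply le_antisymm
  · obtain ⟨M, hM, hcard⟩ := exists_isSidon_card_eq_sMax t
    rw [← hcard]
    exact hM.card_le_sfsMax_add_one
  · obtain ⟨M, hfree, hsidon, hcard⟩ := exists_isSumFree_isSidon_card_eq_sfsMax t
    rw [← hcard, ← Finset.card_insert_of_notMem hfree.zero_notMem]
    exact (hfree.isSidon_insert_zero hsidon).card_le_sMax
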